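/- Let R_s > 0, Ω := {x ∈ ℝ³ : |x| > R_s}, and define (A_{3/2}v)(x) := ∑_{i,j=1}^{3} a_{ij}(x) ∂_i∂_j v(x) + (R_s²/(4|x|⁴))·v(x), where a_kk(x) := −(1 − R_s/|x|)·(R_s x_k²/|x|³ − 2) and a_kℓ(x) := −(1 − R_s/|x|)·R_s x_k x_ℓ/|x|³ for k ≠ ℓ. Then for every real-valued v ∈ C_c^∞(Ω): ∫_{ℝ³} (A_{3/2}v)(x)·v(x) dx ≤ 0; that is, A_{3/2} is non-positive on smooth real functions compactly supported in the exterior of the black hole. -/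

import Mathlib

/-!
Write `r = |x|`, `f = 1 - R_s / r`, `p = ∇v` and `D = ∂_r v`. The coefficient matrix is
`a = f (2 I - (R_s / r³) x xᵀ)`, and the field `∑_i ∂_i a_ij = R_s x_j / r³` is divergence free, so
integration by parts turns the claim into `∫ R_s² / (4 r⁴) v² ≤ ∫ a(p, p)`. Since `a ≥ f²` in the
radial direction, this follows from the Hardy inequality `¼ ∫ v² / r² ≤ ∫ f² D²` and `R_s ≤ r`.

The two integrations by parts and the square completed in the proof of the Hardy inequality combine
into one pointwise identity,
`div W = (A_{3/2} v) v + f (2 |p|² - D²) + (f D + v / (2 r))² + (1 - R_s² / r²) v² / (4 r²)`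
with `W = (a ∇v + (1 / (2 r²) - R_s / r³) v x) v`, and `∫ div W = 0`.
-/

open MeasureTheory

/-- The second-order coefficients of the operator `A_{3/2}` obtained from the spatial
Klein–Gordon operator by the Liouville transform. -/
noncomputable def amat (Rs : ℝ) (i j : Fin 3) (x : EuclideanSpace ℝ (Fin 3)) : ℝ :=
  if i = j then -(1 - Rs / ‖x‖) * (Rs * x i ^ 2 / ‖x‖ ^ 3 - 2)
  else -(1 - Rs / ‖x‖) * (Rs * x i * x j / ‖x‖ ^ 3)

/-- Partial derivative in the `i`-th coordinate direction of a real-valued function. -/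
noncomputable def pdr (i : Fin 3) (u : EuclideanSpace ℝ (Fin 3) → ℝ)
    (x : EuclideanSpace ℝ (Fin 3)) : ℝ :=
  fderiv ℝ u x (EuclideanSpace.single i 1)

/-- The operator `A_{3/2} v = ∑_{i,j} a_ij ∂_i∂_j v + (R_s²/(4|x|⁴)) v` (real version). -/
noncomputable def A32r (Rs : ℝ) (u : EuclideanSpace ℝ (Fin 3) → ℝ)
    (x : EuclideanSpace ℝ (Fin 3)) : ℝ :=
  (∑ i : Fin 3, ∑ j : Fin 3, amat Rs i j x * pdr i (pdr j u) x) +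
    Rs ^ 2 / (4 * ‖x‖ ^ 4) * u x

section IntegralFDeriv

variable {E F : Type*} [NormedAddCommGroup E] [NormedSpace ℝ E] [MeasurableSpace E]
  [BorelSpace E] [NormedAddCommGroup F] [NormedSpace ℝ F] {μ : Measure E} {w : E → F}

lemma integrable_fderiv_apply_of_hasCompactSupport [IsFiniteMeasureOnCompacts μ]
    (hw : ContDiff ℝ 1 w) (hwc : HasCompactSupport w) (e : E) :
    Integrable (fun x => fderiv ℝ w x e) μ :=
  ((hw.continuous_fderiv one_ne_zero).clm_apply continuous_const).integrable_of_hasCompactSupport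
    (hwc.fderiv_apply ℝ e)

lemma integral_fderiv_apply_eq_zero [FiniteDimensional ℝ E] [μ.IsAddHaarMeasure]
    (hw : ContDiff ℝ 1 w) (hwc : HasCompactSupport w) (e : E) :
    ∫ x, fderiv ℝ w x e ∂μ = 0 := by
  have h := integral_smul_fderiv_eq_neg_fderiv_smul_of_integrable (μ := μ) (𝕜 := ℝ)
    (f := fun _ : E => (1 : ℝ)) (g := w) (v := e) (by simp)
    (by simpa using integrable_fderiv_apply_of_hasCompactSupport hw hwc e)
    (by simpa using hw.continuous.integrable_of_hasCompactSupport hwc)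
    (fun _ _ => differentiableAt_const _) (fun x _ => hw.differentiable one_ne_zero x)
  simpa using h

end IntegralFDeriv

lemma inv_pow_add_mul_pow {G : Type*} [CommGroupWithZero G] {c : G} (hc : c ≠ 0) (m n : ℕ) :
    c⁻¹ ^ (m + n) * c ^ n = c⁻¹ ^ m := by
  rw [pow_add, mul_assoc, ← mul_pow, inv_mul_cancel₀ hc, one_pow, mul_one]

lemma hasDerivAt_inv_pow {r : ℝ} (hr : r ≠ 0) (n : ℕ) :
    HasDerivAt (fun t : ℝ => t⁻¹ ^ n) (-n * r⁻¹ ^ (n + 1)) r := by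
  have h := hasDerivAt_zpow (-n : ℤ) r (Or.inl hr)
  have hexp : (-n - 1 : ℤ) = -((n + 1 : ℕ) : ℤ) := by push_cast; ring
  simpa only [hexp, zpow_neg, zpow_natCast, ← inv_pow, Int.cast_neg, Int.cast_natCast] using h

section NormInvPow

variable {E : Type*} [NormedAddCommGroup E] [InnerProductSpace ℝ E] {x : E}

lemma contDiffAt_norm_inv_pow {m : WithTop ℕ∞} (hx : x ≠ 0) (n : ℕ) :
    ContDiffAt ℝ m (fun y : E => ‖y‖⁻¹ ^ n) x :=
  ((contDiffAt_norm ℝ hx).inv (norm_ne_zero_iff.mpr hx)).pow n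

lemma differentiableAt_norm_inv_pow (hx : x ≠ 0) (n : ℕ) :
    DifferentiableAt ℝ (fun y : E => ‖y‖⁻¹ ^ n) x :=
  (contDiffAt_norm_inv_pow hx n).differentiableAt one_ne_zero

end NormInvPow

lemma differentiableAt_coord {ι : Type*} {x : EuclideanSpace ℝ ι} (i : ι) :
    DifferentiableAt ℝ (fun y : EuclideanSpace ℝ ι => y i) x :=
  (EuclideanSpace.proj i : EuclideanSpace ℝ ι →L[ℝ] ℝ).differentiableAt

section PartialDerivatives

variable {u v w : EuclideanSpace ℝ (Fin 3) → ℝ} {x : EuclideanSpace ℝ (Fin 3)}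

lemma contDiff_pdr {m n : WithTop ℕ∞} (hv : ContDiff ℝ n v) (hmn : m + 1 ≤ n) (i : Fin 3) :
    ContDiff ℝ m (pdr i v) :=
  (hv.fderiv_right hmn).clm_apply contDiff_const

lemma pdr_eq_zero_of_notMem_tsupport (hx : x ∉ tsupport v) (i : Fin 3) : pdr i v x = 0 := by
  rw [pdr, image_eq_zero_of_notMem_tsupport fun h => hx (tsupport_fderiv_subset ℝ h),
    zero_apply]

lemma pdr_const (c : ℝ) (i : Fin 3) : pdr i (fun _ => c) x = 0 := by
  simp [pdr]

lemma pdr_coord (i j : Fin 3) : pdr i (fun y => y j) x = if i = j then 1 else 0 := by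
  have h : fderiv ℝ (fun y : EuclideanSpace ℝ (Fin 3) => y j) x = EuclideanSpace.proj j :=
    (EuclideanSpace.proj j : EuclideanSpace ℝ (Fin 3) →L[ℝ] ℝ).fderiv
  simp [pdr, h, eq_comm]

lemma pdr_add (hu : DifferentiableAt ℝ u x) (hw : DifferentiableAt ℝ w x) (i : Fin 3) :
    pdr i (fun y => u y + w y) x = pdr i u x + pdr i w x := by
  simp [pdr, fderiv_fun_add hu hw]

lemma pdr_sub (hu : DifferentiableAt ℝ u x) (hw : DifferentiableAt ℝ w x) (i : Fin 3) :
    pdr i (fun y => u y - w y) x = pdr i u x - pdr i w x := by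
  simp [pdr, fderiv_fun_sub hu hw]

lemma pdr_sum {ι : Type*} {s : Finset ι} {f : ι → EuclideanSpace ℝ (Fin 3) → ℝ}
    (hf : ∀ j ∈ s, DifferentiableAt ℝ (f j) x) (i : Fin 3) :
    pdr i (fun y => ∑ j ∈ s, f j y) x = ∑ j ∈ s, pdr i (f j) x := by
  simp [pdr, fderiv_fun_sum hf]

lemma pdr_mul (hu : DifferentiableAt ℝ u x) (hw : DifferentiableAt ℝ w x) (i : Fin 3) :
    pdr i (fun y => u y * w y) x = pdr i u x * w x + u x * pdr i w x := by
  simp only [pdr, fderiv_fun_mul hu hw, add_apply, smul_apply, smul_eq_mul]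
  ring

lemma pdr_const_mul (c : ℝ) (hu : DifferentiableAt ℝ u x) (i : Fin 3) :
    pdr i (fun y => c * u y) x = c * pdr i u x := by
  simp [pdr, fderiv_const_mul hu]

lemma pdr_norm (hx : x ≠ 0) (i : Fin 3) : pdr i (fun y => ‖y‖) x = ‖x‖⁻¹ * x i := by
  have h := (hasStrictFDerivAt_norm_sq x).hasFDerivAt.sqrt (by simpa using hx)
  simp only [Real.sqrt_sq (norm_nonneg _)] at h
  simp only [pdr, h.fderiv, one_div, mul_inv_rev, smul_apply, coe_innerSL_apply,
    EuclideanSpace.inner_single_right, Real.ringHom_apply, one_mul, nsmul_eq_mul, Nat.cast_ofNat,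
    smul_eq_mul]
  ring

lemma pdr_norm_inv_pow (hx : x ≠ 0) (n : ℕ) (i : Fin 3) :
    pdr i (fun y => ‖y‖⁻¹ ^ n) x = -n * ‖x‖⁻¹ ^ (n + 2) * x i := by
  have hd : DifferentiableAt ℝ (fun y : EuclideanSpace ℝ (Fin 3) => ‖y‖) x :=
    (contDiffAt_norm ℝ hx (n := 1)).differentiableAt one_ne_zero
  have hchain : HasFDerivAt (fun y : EuclideanSpace ℝ (Fin 3) => ‖y‖⁻¹ ^ n) _ x :=
    (hasDerivAt_inv_pow (norm_ne_zero_iff.mpr hx) n).comp_hasFDerivAt x hd.hasFDerivAt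
  calc pdr i (fun y => ‖y‖⁻¹ ^ n) x = -n * ‖x‖⁻¹ ^ (n + 1) * pdr i (fun y => ‖y‖) x := by
        rw [pdr, hchain.fderiv]
        rfl
    _ = -n * ‖x‖⁻¹ ^ (n + 2) * x i := by
        rw [pdr_norm hx]
        ring

lemma sum_pdr_norm_inv_pow_mul_coord_mul (hx : x ≠ 0) (n : ℕ) (hu : DifferentiableAt ℝ u x) :
    ∑ i, pdr i (fun y => ‖y‖⁻¹ ^ n * (y i * u y)) x =
      ‖x‖⁻¹ ^ n * ((3 - n) * u x + ∑ i, x i * pdr i u x) := by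
  have hterm (i : Fin 3) : pdr i (fun y => ‖y‖⁻¹ ^ n * (y i * u y)) x =
      ‖x‖⁻¹ ^ n * u x - n * ‖x‖⁻¹ ^ (n + 2) * u x * x i ^ 2 + ‖x‖⁻¹ ^ n * (x i * pdr i u x) := by
    rw [pdr_mul (differentiableAt_norm_inv_pow hx n) ((differentiableAt_coord i).fun_mul hu),
      pdr_mul (differentiableAt_coord i) hu, pdr_norm_inv_pow hx, pdr_coord, if_pos rfl]
    ring
  simp only [hterm, Finset.sum_add_distrib, Finset.sum_sub_distrib, ← Finset.mul_sum,
    ← EuclideanSpace.real_norm_sq_eq, Finset.sum_const, Finset.card_univ, Fintype.card_fin,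
    nsmul_eq_mul, Nat.cast_ofNat]
  linear_combination (-(n : ℝ) * u x) * inv_pow_add_mul_pow (norm_ne_zero_iff.mpr hx) n 2

lemma sum_pdr_norm_inv_pow_mul_coord (hx : x ≠ 0) (n : ℕ) :
    ∑ i, pdr i (fun y => ‖y‖⁻¹ ^ n * y i) x = (3 - n) * ‖x‖⁻¹ ^ n := by
  simpa [pdr_const, mul_comm] using
    sum_pdr_norm_inv_pow_mul_coord_mul hx n (differentiableAt_const (1 : ℝ))

/-- The radial derivative `∂_r v = r⁻¹ x · ∇v`, equal to `0` at the origin. -/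
noncomputable def radialDeriv (v : EuclideanSpace ℝ (Fin 3) → ℝ)
    (x : EuclideanSpace ℝ (Fin 3)) : ℝ :=
  ‖x‖⁻¹ * ∑ i, x i * pdr i v x

lemma radialDeriv_sq_le (v : EuclideanSpace ℝ (Fin 3) → ℝ) (x : EuclideanSpace ℝ (Fin 3)) :
    radialDeriv v x ^ 2 ≤ ∑ i, pdr i v x ^ 2 := by
  calc radialDeriv v x ^ 2 = ‖x‖⁻¹ ^ 2 * (∑ i, x i * pdr i v x) ^ 2 := mul_pow _ _ _
    _ ≤ ‖x‖⁻¹ ^ 2 * ((∑ i, x i ^ 2) * ∑ i, pdr i v x ^ 2) := by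
        gcongr
        exact Finset.sum_mul_sq_le_sq_mul_sq _ _ _
    _ = (‖x‖⁻¹ * ‖x‖) ^ 2 * ∑ i, pdr i v x ^ 2 := by
        rw [← EuclideanSpace.real_norm_sq_eq]
        ring
    _ ≤ ∑ i, pdr i v x ^ 2 :=
        mul_le_of_le_one_left (by positivity) (pow_le_one₀ (by positivity) inv_mul_le_one)

end PartialDerivatives

section EnergyFlux

variable {a : Fin 3 → Fin 3 → EuclideanSpace ℝ (Fin 3) → ℝ}
  {b : Fin 3 → EuclideanSpace ℝ (Fin 3) → ℝ} {v : EuclideanSpace ℝ (Fin 3) → ℝ}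

/-- The vector field `(a ∇v + v b) v`, whose divergence collects the boundary terms left by
integrating `v ∑ a_ij ∂_i ∂_j v` by parts, corrected by those of the vector field `v² b`. -/
noncomputable def energyFlux (a : Fin 3 → Fin 3 → EuclideanSpace ℝ (Fin 3) → ℝ)
    (b : Fin 3 → EuclideanSpace ℝ (Fin 3) → ℝ) (v : EuclideanSpace ℝ (Fin 3) → ℝ) (i : Fin 3)
    (x : EuclideanSpace ℝ (Fin 3)) : ℝ :=
  (∑ j, a i j x * pdr j v x + b i x * v x) * v x

lemma sum_pdr_energyFlux {x : EuclideanSpace ℝ (Fin 3)}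
    (ha : ∀ i j, DifferentiableAt ℝ (a i j) x) (hb : ∀ i, DifferentiableAt ℝ (b i) x)
    (hv : DifferentiableAt ℝ v x) (hp : ∀ j, DifferentiableAt ℝ (pdr j v) x) :
    ∑ i, pdr i (energyFlux a b v i) x =
      (∑ i, ∑ j, a i j x * pdr i (pdr j v) x) * v x
        + (∑ j, (∑ i, pdr i (a i j) x) * pdr j v x) * v x
        + ∑ i, ∑ j, a i j x * (pdr i v x * pdr j v x)
        + (∑ i, pdr i (b i) x) * v x ^ 2
        + 2 * (∑ i, b i x * pdr i v x) * v x := by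
  have dap (i j : Fin 3) : DifferentiableAt ℝ (fun y => a i j y * pdr j v y) x :=
    (ha i j).fun_mul (hp j)
  have dsum (i : Fin 3) : DifferentiableAt ℝ (fun y => ∑ j, a i j y * pdr j v y) x :=
    DifferentiableAt.fun_sum fun j _ => dap i j
  have dbv (i : Fin 3) : DifferentiableAt ℝ (fun y => b i y * v y) x := (hb i).fun_mul hv
  have hterm (i : Fin 3) : pdr i (energyFlux a b v i) x =
      (∑ j, (pdr i (a i j) x * pdr j v x + a i j x * pdr i (pdr j v) x)
          + (pdr i (b i) x * v x + b i x * pdr i v x)) * v x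
        + (∑ j, a i j x * pdr j v x + b i x * v x) * pdr i v x := by
    unfold energyFlux
    rw [pdr_mul ((dsum i).fun_add (dbv i)) hv, pdr_add (dsum i) (dbv i),
      pdr_sum fun j _ => dap i j, pdr_mul (hb i) hv]
    simp only [pdr_mul (ha i _) (hp _)]
  simp only [hterm, Fin.sum_univ_three]
  ring

lemma tsupport_energyFlux_subset (i : Fin 3) : tsupport (energyFlux a b v i) ⊆ tsupport v :=
  tsupport_mul_subset_right

lemma hasCompactSupport_energyFlux (hvc : HasCompactSupport v) (i : Fin 3) :
    HasCompactSupport (energyFlux a b v i) :=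
  hvc.mul_left

lemma contDiff_energyFlux {n : WithTop ℕ∞} (ha : ∀ x ∈ tsupport v, ∀ i j, ContDiffAt ℝ n (a i j) x)
    (hb : ∀ x ∈ tsupport v, ∀ i, ContDiffAt ℝ n (b i) x) (hv : ContDiff ℝ (n + 1) v) (i : Fin 3) :
    ContDiff ℝ n (energyFlux a b v i) := by
  refine contMDiff_iff_contDiff.mp (contMDiff_of_tsupport fun x hx => ?_)
  have hxv : x ∈ tsupport v := tsupport_energyFlux_subset i hx
  have hvx : ContDiffAt ℝ n v x := (hv.of_le le_self_add).contDiffAt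
  have hp (j : Fin 3) : ContDiffAt ℝ n (pdr j v) x := (contDiff_pdr hv le_rfl j).contDiffAt
  exact contMDiffAt_iff_contDiffAt.mpr <|
    ((ContDiffAt.sum fun j _ => (ha x hxv i j).mul (hp j)).add ((hb x hxv i).mul hvx)).mul hvx

end EnergyFlux

section Coefficients

variable {n : WithTop ℕ∞} {x : EuclideanSpace ℝ (Fin 3)}

lemma amat_eq (Rs : ℝ) (i j : Fin 3) : amat Rs i j = fun x =>
    (1 - Rs * ‖x‖⁻¹) * ((if i = j then 2 else 0) - Rs * ‖x‖⁻¹ ^ 3 * (x i * x j)) := by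
  funext x
  by_cases hij : i = j
  · subst hij
    simp only [amat, if_true, div_eq_mul_inv, inv_pow]
    ring
  · simp only [amat, if_neg hij, div_eq_mul_inv, inv_pow]
    ring

lemma contDiffAt_amat (hx : x ≠ 0) (Rs : ℝ) (i j : Fin 3) : ContDiffAt ℝ n (amat Rs i j) x := by
  have hinv : ContDiffAt ℝ n (fun y : EuclideanSpace ℝ (Fin 3) => ‖y‖⁻¹) x := by
    simpa only [pow_one] using contDiffAt_norm_inv_pow hx 1
  rw [amat_eq]
  fun_prop

lemma differentiableAt_amat (hx : x ≠ 0) (Rs : ℝ) (i j : Fin 3) :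
    DifferentiableAt ℝ (amat Rs i j) x :=
  (contDiffAt_amat hx Rs i j).differentiableAt one_ne_zero

lemma sum_pdr_amat (hx : x ≠ 0) (Rs : ℝ) (j : Fin 3) :
    ∑ i, pdr i (amat Rs i j) x = Rs * ‖x‖⁻¹ ^ 3 * x j := by
  have ds : DifferentiableAt ℝ (fun y : EuclideanSpace ℝ (Fin 3) => ‖y‖⁻¹) x := by
    simpa only [pow_one] using differentiableAt_norm_inv_pow hx 1
  have dG (i : Fin 3) : DifferentiableAt ℝ
      (fun y : EuclideanSpace ℝ (Fin 3) => ‖y‖⁻¹ ^ 3 * (y i * y j)) x :=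
    (differentiableAt_norm_inv_pow hx 3).fun_mul
      ((differentiableAt_coord i).fun_mul (differentiableAt_coord j))
  have hfactor (i : Fin 3) : pdr i (fun y => 1 - Rs * ‖y‖⁻¹) x = Rs * ‖x‖⁻¹ ^ 3 * x i := by
    have hs : pdr i (fun y => ‖y‖⁻¹) x = -‖x‖⁻¹ ^ 3 * x i := by
      simpa using pdr_norm_inv_pow hx 1 i
    rw [pdr_sub (differentiableAt_const _) (ds.const_mul _), pdr_const, pdr_const_mul _ ds, hs]
    ring
  have hterm (i : Fin 3) : pdr i (amat Rs i j) x =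
      Rs * ‖x‖⁻¹ ^ 3 * (if i = j then 2 * x i else 0) - Rs ^ 2 * ‖x‖⁻¹ ^ 6 * x j * x i ^ 2
        - (1 - Rs * ‖x‖⁻¹) * Rs * pdr i (fun y => ‖y‖⁻¹ ^ 3 * (y i * y j)) x := by
    simp only [amat_eq, mul_assoc Rs (_ ^ 3)]
    rw [pdr_mul ((differentiableAt_const _).fun_sub (ds.const_mul _))
        ((differentiableAt_const _).fun_sub ((dG i).const_mul _)), hfactor,
      pdr_sub (differentiableAt_const _) ((dG i).const_mul _), pdr_const, pdr_const_mul _ (dG i)]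
    split_ifs <;> ring
  simp only [hterm, Finset.sum_sub_distrib, ← Finset.mul_sum, ← EuclideanSpace.real_norm_sq_eq,
    Finset.sum_ite_eq', Finset.mem_univ, if_true,
    sum_pdr_norm_inv_pow_mul_coord_mul hx 3 (differentiableAt_coord j), pdr_coord, mul_ite, mul_one,
    mul_zero]
  push_cast
  linear_combination (-Rs ^ 2 * x j) * inv_pow_add_mul_pow (norm_ne_zero_iff.mpr hx) 4 2

lemma sum_amat_mul_mul (Rs : ℝ) (x : EuclideanSpace ℝ (Fin 3)) (p : Fin 3 → ℝ) :
    ∑ i, ∑ j, amat Rs i j x * (p i * p j) =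
      (1 - Rs * ‖x‖⁻¹) * (2 * ∑ i, p i ^ 2 - Rs * ‖x‖⁻¹ ^ 3 * (∑ i, x i * p i) ^ 2) := by
  simp only [amat_eq, Fin.sum_univ_three, Fin.reduceEq, if_true, if_false]
  ring

/-- The radial field `(1 / (2 r²) - R_s / r³) x`. Its first part gives the Hardy inequality
`¼ ∫ v² / r² ≤ ∫ (∂_r v)²`, its second part shifts the weight to `(1 - R_s / r)²` and absorbs
`∑ ∂_i a_ij`. -/
noncomputable def hardyField (Rs : ℝ) (i : Fin 3) (x : EuclideanSpace ℝ (Fin 3)) : ℝ :=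
  (‖x‖⁻¹ ^ 2 / 2 - Rs * ‖x‖⁻¹ ^ 3) * x i

lemma contDiffAt_hardyField (hx : x ≠ 0) (Rs : ℝ) (i : Fin 3) :
    ContDiffAt ℝ n (hardyField Rs i) x := by
  have h2 := contDiffAt_norm_inv_pow (m := n) hx 2
  have h3 := contDiffAt_norm_inv_pow (m := n) hx 3
  unfold hardyField
  fun_prop

lemma differentiableAt_hardyField (hx : x ≠ 0) (Rs : ℝ) (i : Fin 3) :
    DifferentiableAt ℝ (hardyField Rs i) x :=
  (contDiffAt_hardyField hx Rs i).differentiableAt one_ne_zero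

lemma sum_pdr_hardyField (hx : x ≠ 0) (Rs : ℝ) :
    ∑ i, pdr i (hardyField Rs i) x = ‖x‖⁻¹ ^ 2 / 2 := by
  have hdiff (n : ℕ) (i : Fin 3) : DifferentiableAt ℝ
      (fun y : EuclideanSpace ℝ (Fin 3) => ‖y‖⁻¹ ^ n * y i) x :=
    (differentiableAt_norm_inv_pow hx n).fun_mul (differentiableAt_coord i)
  have hsplit (i : Fin 3) : hardyField Rs i =
      fun y => 2⁻¹ * (‖y‖⁻¹ ^ 2 * y i) - Rs * (‖y‖⁻¹ ^ 3 * y i) := by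
    funext y
    rw [hardyField]
    ring
  have hterm (i : Fin 3) : pdr i (hardyField Rs i) x =
      2⁻¹ * pdr i (fun y => ‖y‖⁻¹ ^ 2 * y i) x - Rs * pdr i (fun y => ‖y‖⁻¹ ^ 3 * y i) x := by
    rw [hsplit, pdr_sub ((hdiff 2 i).const_mul _) ((hdiff 3 i).const_mul _),
      pdr_const_mul _ (hdiff 2 i), pdr_const_mul _ (hdiff 3 i)]
  simp only [hterm, Finset.sum_sub_distrib, ← Finset.mul_sum, sum_pdr_norm_inv_pow_mul_coord hx]
  push_cast
  ring

end Coefficients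

section SchwarzschildExterior

variable {Rs : ℝ} {v : EuclideanSpace ℝ (Fin 3) → ℝ} {x : EuclideanSpace ℝ (Fin 3)}

lemma sum_pdr_energyFlux_amat_hardyField (hv : ContDiff ℝ 2 v) (hx : x ≠ 0) (Rs : ℝ) :
    ∑ i, pdr i (energyFlux (amat Rs) (hardyField Rs) v i) x =
      A32r Rs v x * v x
        + (1 - Rs * ‖x‖⁻¹) * (2 * ∑ i, pdr i v x ^ 2 - radialDeriv v x ^ 2)
        + ((1 - Rs * ‖x‖⁻¹) * radialDeriv v x + ‖x‖⁻¹ * v x / 2) ^ 2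
        + (1 - (Rs * ‖x‖⁻¹) ^ 2) * (‖x‖⁻¹ * v x / 2) ^ 2 := by
  have hdiv : ∑ j, (∑ i, pdr i (amat Rs i j) x) * pdr j v x =
      Rs * ‖x‖⁻¹ ^ 3 * ∑ j, x j * pdr j v x := by
    simp only [sum_pdr_amat hx, Finset.mul_sum, mul_assoc]
  have hhardy : ∑ i, hardyField Rs i x * pdr i v x =
      (‖x‖⁻¹ ^ 2 / 2 - Rs * ‖x‖⁻¹ ^ 3) * ∑ i, x i * pdr i v x := by
    simp only [hardyField, Finset.mul_sum, mul_assoc]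
  have hp (j : Fin 3) : DifferentiableAt ℝ (pdr j v) x :=
    (contDiff_pdr hv one_add_one_eq_two.le j).differentiable one_ne_zero x
  rw [sum_pdr_energyFlux (differentiableAt_amat hx Rs) (differentiableAt_hardyField hx Rs)
    (hv.differentiable two_ne_zero x) hp, hdiv, sum_amat_mul_mul,
    sum_pdr_hardyField hx, hhardy, A32r, radialDeriv]
  field_simp
  ring

lemma A32r_mul_self_le_sum_pdr_energyFlux (hv : ContDiff ℝ 2 v) (hx : x ≠ 0)
    (hRs : |Rs| ≤ ‖x‖) :
    A32r Rs v x * v x ≤ ∑ i, pdr i (energyFlux (amat Rs) (hardyField Rs) v i) x := by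
  have habs : |Rs * ‖x‖⁻¹| ≤ 1 := by
    rw [abs_mul, abs_inv, abs_norm, ← div_eq_mul_inv]
    exact div_le_one_of_le₀ hRs (norm_nonneg x)
  have hgrad : 0 ≤ (1 - Rs * ‖x‖⁻¹) * (2 * ∑ i, pdr i v x ^ 2 - radialDeriv v x ^ 2) := by
    have hsum : 0 ≤ ∑ i, pdr i v x ^ 2 := by positivity
    exact mul_nonneg (sub_nonneg.mpr (le_of_abs_le habs))
      (by linarith [radialDeriv_sq_le v x])
  have hpot : 0 ≤ (1 - (Rs * ‖x‖⁻¹) ^ 2) * (‖x‖⁻¹ * v x / 2) ^ 2 :=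
    mul_nonneg (sub_nonneg.mpr ((sq_le_one_iff_abs_le_one _).mpr habs)) (sq_nonneg _)
  rw [sum_pdr_energyFlux_amat_hardyField hv hx]
  linarith [sq_nonneg ((1 - Rs * ‖x‖⁻¹) * radialDeriv v x + ‖x‖⁻¹ * v x / 2)]

lemma continuousAt_A32r (hv : ContDiff ℝ 2 v) (hx : x ≠ 0) (Rs : ℝ) :
    ContinuousAt (A32r Rs v) x := by
  have ha (i j : Fin 3) := (differentiableAt_amat hx Rs i j).continuousAt
  have hp (i j : Fin 3) : ContinuousAt (pdr i (pdr j v)) x :=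
    (contDiff_pdr (m := 0) (contDiff_pdr hv one_add_one_eq_two.le j) (by simp)
      i).continuous.continuousAt
  have hv0 : ContinuousAt v x := hv.continuous.continuousAt
  have hr : 4 * ‖x‖ ^ 4 ≠ 0 := by positivity
  unfold A32r
  fun_prop (disch := assumption)

lemma integrable_A32r_mul_self (hv : ContDiff ℝ 2 v) (hvcs : HasCompactSupport v)
    (hv0 : 0 ∉ tsupport v) (Rs : ℝ) : Integrable fun x => A32r Rs v x * v x := by
  have hcont : Continuous fun x => A32r Rs v x * v x := continuous_of_tsupport fun x hx =>
    (continuousAt_A32r hv (ne_of_mem_of_not_mem (tsupport_mul_subset_right hx) hv0) Rs).mul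
      hv.continuous.continuousAt
  exact hcont.integrable_of_hasCompactSupport hvcs.mul_left

theorem A32_nonpositive_general {Rs : ℝ} {v : EuclideanSpace ℝ (Fin 3) → ℝ}
    (hv : ContDiff ℝ 2 v) (hvcs : HasCompactSupport v)
    (hvΩ : tsupport v ⊆ {x : EuclideanSpace ℝ (Fin 3) | x ≠ 0 ∧ |Rs| ≤ ‖x‖}) :
    ∫ x, A32r Rs v x * v x ≤ 0 := by
  set W := energyFlux (amat Rs) (hardyField Rs) v
  have hW (i : Fin 3) : ContDiff ℝ 1 (W i) :=
    contDiff_energyFlux (fun x hx => contDiffAt_amat (hvΩ hx).1 Rs)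
      (fun x hx => contDiffAt_hardyField (hvΩ hx).1 Rs) (hv.of_le one_add_one_eq_two.le) i
  have hWc (i : Fin 3) : HasCompactSupport (W i) := hasCompactSupport_energyFlux hvcs i
  have hWint (i : Fin 3) : Integrable (pdr i (W i)) :=
    integrable_fderiv_apply_of_hasCompactSupport (hW i) (hWc i) _
  have hle (x : EuclideanSpace ℝ (Fin 3)) : A32r Rs v x * v x ≤ ∑ i, pdr i (W i) x := by
    by_cases hx : x ∈ tsupport v
    · exact A32r_mul_self_le_sum_pdr_energyFlux hv (hvΩ hx).1 (hvΩ hx).2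
    · have hWx (i : Fin 3) : pdr i (W i) x = 0 :=
        pdr_eq_zero_of_notMem_tsupport (fun h => hx (tsupport_energyFlux_subset i h)) i
      simp [hWx, image_eq_zero_of_notMem_tsupport hx]
  calc ∫ x, A32r Rs v x * v x ≤ ∫ x, ∑ i, pdr i (W i) x :=
        integral_mono (integrable_A32r_mul_self hv hvcs (fun h => (hvΩ h).1 rfl) Rs)
          (integrable_finsetSum _ fun i _ => hWint i) hle
    _ = ∑ i, ∫ x, pdr i (W i) x := integral_finsetSum _ fun i _ => hWint i
    _ = 0 := Finset.sum_eq_zero fun i _ => integral_fderiv_apply_eq_zero (hW i) (hWc i) _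

end SchwarzschildExterior

/-- `A_{3/2}` is non-positive on smooth real-valued functions compactly
supported in the exterior `Ω = {|x| > R_s}` of the black hole:
`∫ (A_{3/2}v)·v ≤ 0`. -/
theorem A32_nonpositive (Rs : ℝ) (hRs : 0 < Rs)
    (v : EuclideanSpace ℝ (Fin 3) → ℝ)
    (hv : ContDiff ℝ (⊤ : ℕ∞) v) (hvcs : HasCompactSupport v)
    (hvΩ : tsupport v ⊆ {x : EuclideanSpace ℝ (Fin 3) | Rs < ‖x‖}) :
    (∫ x : EuclideanSpace ℝ (Fin 3), A32r Rs v x * v x) ≤ 0 :=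
  A32_nonpositive_general (hv.of_le (WithTop.coe_le_coe.mpr le_top)) hvcs fun _ hx =>
    ⟨norm_pos_iff.mp (hRs.trans (hvΩ hx)), (abs_of_pos hRs).trans_le (hvΩ hx).le⟩
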